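/- Strict monotonicity of year and month addition: for all triples D1 = (y1, m1, d1) and D2 = (y2, m2, d2) with 1 ≤ m1 ≤ 12 and 1 ≤ m2 ≤ 12, every integer n, and every unit δ ∈ {year, month}, if D1 < D2 then D1 +δ n < D2 +δ n. -/

import Mathlib

/-- A value is either a date `(y, m, d)` (a triple of integers in the
Gregorian calendar) or the error element `⊥`. -/
inductive DValue : Type
  | date (y m d : ℤ) : DValue
  | bot : DValue
deriving DecidableEq

/-- `nb_days(y, m)`: the number of days of month `m` in year `y`
(meaningful for `1 ≤ m ≤ 12`). A year is leap iff it is divisible by 4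
and not by 100, or divisible by 400. -/
def nbDays (y m : ℤ) : ℤ :=
  if m = 2 then (if (4 ∣ y ∧ ¬ (100 ∣ y)) ∨ 400 ∣ y then 29 else 28)
  else if m = 4 ∨ m = 6 ∨ m = 9 ∨ m = 11 then 30
  else 31

theorem nbDays_bounds (y m : ℤ) : 28 ≤ nbDays y m ∧ nbDays y m ≤ 31 := by
  unfold nbDays; split_ifs <;> omega

/-- A date `(y, m, d)` is valid iff `1 ≤ m ≤ 12` and `1 ≤ d ≤ nb_days(y, m)`. -/
def ValidDate (y m d : ℤ) : Prop :=
  1 ≤ m ∧ m ≤ 12 ∧ 1 ≤ d ∧ d ≤ nbDays y m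

/-- Year addition: `(y,m,d) +y n = (y+n,m,d)`; `⊥ +y n = ⊥`. -/
def DValue.addY : DValue → ℤ → DValue
  | .date y m d, n => .date (y + n) m d
  | .bot, _ => .bot

/-- Month addition on a date `(y, m, d)` (with `⊥` for a month component
outside `[1,12]`):
`(y,m,d) +m n = (y,m+n,d)` if `1 ≤ m+n ≤ 12`,
`= (y+1,m,d) +m (n−12)` if `m+n > 12`, `= (y−1,m,d) +m (n+12)` if `m+n < 1`. -/
def addMonths (y m d n : ℤ) : DValue :=
  if _h : 1 ≤ m ∧ m ≤ 12 then
    if _h1 : 1 ≤ m + n ∧ m + n ≤ 12 then .date y (m + n) d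
    else if _h2 : 12 < m + n then addMonths (y + 1) m d (n - 12)
    else addMonths (y - 1) m d (n + 12)
  else .bot
termination_by (m + n - 12).toNat + (1 - (m + n)).toNat
decreasing_by all_goals omega

/-- Month addition on values: `⊥ +m n = ⊥`. -/
def DValue.addM : DValue → ℤ → DValue
  | .date y m d, n => addMonths y m d n
  | .bot, _ => .bot

/-- Day addition, following the rules:
for `(y,m,d)` with `1 ≤ d ≤ nb_days(y,m)`:
`(y,m,d) +d n = (y,m,d+n)` if `1 ≤ d+n ≤ nb_days(y,m)`;
`= ((y,m,1) +m 1) +d (n − (nb_days(y,m) − d) − 1)` if `d+n > nb_days(y,m)`;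
`= (y,m,1) +d (d−1+n)` if `d+n ≤ 0` and `d > 1`;
if `n+1 ≤ 0` then, letting `(y',m',d') = (y,m,1) +m (−1)`,
`(y,m,1) +d n = (y',m',1) +d (n + nb_days(y',m'))`.
If `d < 1` or `d > nb_days(y,m)` (or the month is out of range), the result is `⊥`. -/
def addDays (y m d n : ℤ) : DValue :=
  if _hm : 1 ≤ m ∧ m ≤ 12 then
    if _hd : 1 ≤ d ∧ d ≤ nbDays y m then
      if _h1 : 1 ≤ d + n ∧ d + n ≤ nbDays y m then .date y m (d + n)
      else if _h2 : nbDays y m < d + n then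
        match addMonths y m 1 1 with
        | .date y' m' _ => addDays y' m' 1 (n - (nbDays y m - d) - 1)
        | .bot => .bot
      else if _h3 : 1 < d then addDays y m 1 (d - 1 + n)
      else
        match _hprev : addMonths y m 1 (-1) with
        | .date y' m' _ => addDays y' m' 1 (n + nbDays y' m')
        | .bot => .bot
    else .bot
  else .bot
termination_by (if 0 ≤ n then n else 62 - n).toNat
decreasing_by
  · split_ifs <;> omega
  · split_ifs <;> omega
  · have h28 := nbDays_bounds y' m'
    split_ifs <;> omega

/-- Day addition on values: `⊥ +d n = ⊥`. -/
def DValue.addD : DValue → ℤ → DValue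
  | .date y m d, n => addDays y m d n
  | .bot, _ => .bot

/-- Rounding modes: down (`↓`), up (`↑`) and error (`⊥`). -/
inductive RMode : Type
  | down | up | err
deriving DecidableEq

/-- Rounding `rnd_r`: if `1 ≤ d ≤ nb_days(y,m)` then `rnd_r(y,m,d) = (y,m,d)`;
if `d > nb_days(y,m)` then `rnd_↓(y,m,d) = (y,m,nb_days(y,m))`,
`rnd_↑(y,m,d) = (y',m',1)` where `(y',m',d') = (y,m,d) +m 1`, and
`rnd_⊥(y,m,d) = ⊥`; if `d < 1` then `rnd_r(y,m,d) = ⊥`; `rnd_r(⊥) = ⊥`. -/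
def rnd (r : RMode) : DValue → DValue
  | .date y m d =>
    if 1 ≤ d ∧ d ≤ nbDays y m then .date y m d
    else if d < 1 then .bot
    else
      match r with
      | .down => .date y m (nbDays y m)
      | .up =>
        match addMonths y m d 1 with
        | .date y' m' _ => .date y' m' 1
        | .bot => .bot
      | .err => .bot
  | .bot => .bot

/-- A period `(py, pm, pd)`: a number of years, months and days. -/
structure Period : Type where
  py : ℤ
  pm : ℤ
  pd : ℤ
deriving DecidableEq

/-- Derived addition of a period with rounding mode `r`:
`e +r (py, pm, pd) = rnd_r((e +y py) +m pm) +d pd`. -/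
def addPeriod (r : RMode) (e : DValue) (p : Period) : DValue :=
  ((rnd r ((e.addY p.py).addM p.pm)).addD p.pd)

/-- Strict lexicographic order on dates. -/
def DateLt (y1 m1 d1 y2 m2 d2 : ℤ) : Prop :=
  y1 < y2 ∨ (y1 = y2 ∧ (m1 < m2 ∨ (m1 = m2 ∧ d1 < d2)))

/-- Large lexicographic order on dates. -/
def DateLe (y1 m1 d1 y2 m2 d2 : ℤ) : Prop :=
  y1 < y2 ∨ (y1 = y2 ∧ (m1 < m2 ∨ (m1 = m2 ∧ d1 ≤ d2)))

/-- Comparison lifted to values: it holds only between two dates. -/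
def DValue.lt : DValue → DValue → Prop
  | .date y1 m1 d1, .date y2 m2 d2 => DateLt y1 m1 d1 y2 m2 d2
  | _, _ => False

/-- Comparison lifted to values: it holds only between two dates. -/
def DValue.le : DValue → DValue → Prop
  | .date y1 m1 d1, .date y2 m2 d2 => DateLe y1 m1 d1 y2 m2 d2
  | _, _ => False

/-- A value is a valid date: it is not `⊥` and its components are valid. -/
def IsValidDate : DValue → Prop
  | .date y m d => ValidDate y m d
  | .bot => False

def yearOf : DValue → ℤ
  | .date y _ _ => y
  | .bot => 0

def monthOf : DValue → ℤ
  | .date _ m _ => m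
  | .bot => 0

def dayOf : DValue → ℤ
  | .date _ _ d => d
  | .bot => 0

/-- Date units: year, month, day. -/
inductive DUnit : Type
  | year | month | day
deriving DecidableEq

/-- Addition of `n` units to a value. -/
def addU : DUnit → DValue → ℤ → DValue
  | .year, v, n => v.addY n
  | .month, v, n => v.addM n
  | .day, v, n => v.addD n

/-- Componentwise addition of periods. -/
def Period.add (p q : Period) : Period :=
  ⟨p.py + q.py, p.pm + q.pm, p.pd + q.pd⟩

/-!
Number the months consecutively, month `m` of year `y` receiving the index `12 * y + (m - 1)`.
For month components in `[1, 12]`, the date order is the lexicographic order on (index, day), and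
adding `n` months translates the index by `n`.
-/

/-- The position of month `m` of year `y` when all months are numbered consecutively, January of
year `0` having index `0`. It linearizes month addition. -/
def monthIndex (y m : ℤ) : ℤ :=
  12 * y + (m - 1)

namespace DValue

/-- The date with day component `d` in the month of index `k`; this inverts `monthIndex`. Euclidean
division rounds towards `-∞`, so the month component lies in `[1, 12]` for negative `k` too. -/
def ofMonthIndex (k d : ℤ) : DValue :=
  date (k / 12) (k % 12 + 1) d

theorem ofMonthIndex_monthIndex (y d : ℤ) {m : ℤ} (hm : 1 ≤ m) (hm' : m ≤ 12) :
    ofMonthIndex (monthIndex y m) d = date y m d := by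
  have year_eq : monthIndex y m / 12 = y := by unfold monthIndex; omega
  have month_eq : monthIndex y m % 12 + 1 = m := by unfold monthIndex; omega
  rw [ofMonthIndex, year_eq, month_eq]

theorem ofMonthIndex_lt_ofMonthIndex_iff (k₁ d₁ k₂ d₂ : ℤ) :
    (ofMonthIndex k₁ d₁).lt (ofMonthIndex k₂ d₂) ↔ k₁ < k₂ ∨ k₁ = k₂ ∧ d₁ < d₂ := by
  simp only [ofMonthIndex, DValue.lt, DateLt]
  omega

theorem addMonths_eq_ofMonthIndex (y d n : ℤ) {m : ℤ} (hm : 1 ≤ m) (hm' : m ≤ 12) :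
    addMonths y m d n = ofMonthIndex (monthIndex y m + n) d := by
  induction y, n using addMonths.induct (m := m) with
  | case1 y n hmonth hsum =>
    have index_eq : monthIndex y m + n = monthIndex y (m + n) := by unfold monthIndex; ring
    rw [addMonths, dif_pos hmonth, dif_pos hsum, index_eq,
      ofMonthIndex_monthIndex y d hsum.1 hsum.2]
  | case2 y n hmonth hsum hover ih =>
    have index_eq : monthIndex (y + 1) m + (n - 12) = monthIndex y m + n := by
      unfold monthIndex; ring
    rw [addMonths, dif_pos hmonth, dif_neg hsum, dif_pos hover, ih, index_eq]
  | case3 y n hmonth hsum hunder ih =>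
    have index_eq : monthIndex (y - 1) m + (n + 12) = monthIndex y m + n := by
      unfold monthIndex; ring
    rw [addMonths, dif_pos hmonth, dif_neg hsum, dif_neg hunder, ih, index_eq]
  | case4 y n hmonth => exact absurd ⟨hm, hm'⟩ hmonth

theorem addY_lt_addY_iff (v w : DValue) (n : ℤ) : (v.addY n).lt (w.addY n) ↔ v.lt w := by
  cases v <;> cases w <;> simp only [addY, DValue.lt, DateLt, add_lt_add_iff_right, add_left_inj]

theorem date_addM_lt_date_addM_iff (y₁ d₁ y₂ d₂ n : ℤ) {m₁ m₂ : ℤ}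
    (hm₁ : 1 ≤ m₁) (hm₁' : m₁ ≤ 12) (hm₂ : 1 ≤ m₂) (hm₂' : m₂ ≤ 12) :
    ((date y₁ m₁ d₁).addM n).lt ((date y₂ m₂ d₂).addM n) ↔
      (date y₁ m₁ d₁).lt (date y₂ m₂ d₂) := by
  calc ((date y₁ m₁ d₁).addM n).lt ((date y₂ m₂ d₂).addM n)
    _ ↔ (ofMonthIndex (monthIndex y₁ m₁ + n) d₁).lt (ofMonthIndex (monthIndex y₂ m₂ + n) d₂) := by
      rw [addM, addM, addMonths_eq_ofMonthIndex y₁ d₁ n hm₁ hm₁',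
        addMonths_eq_ofMonthIndex y₂ d₂ n hm₂ hm₂']
    _ ↔ (ofMonthIndex (monthIndex y₁ m₁) d₁).lt (ofMonthIndex (monthIndex y₂ m₂) d₂) := by
      simp only [ofMonthIndex_lt_ofMonthIndex_iff, add_lt_add_iff_right, add_left_inj]
    _ ↔ (date y₁ m₁ d₁).lt (date y₂ m₂ d₂) := by
      rw [ofMonthIndex_monthIndex y₁ d₁ hm₁ hm₁', ofMonthIndex_monthIndex y₂ d₂ hm₂ hm₂']

end DValue

/-- **Strict monotonicity of year and month addition**: for all triples
`D1 = (y1, m1, d1)` and `D2 = (y2, m2, d2)` with month components in `[1, 12]`,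
every integer `n`, and every unit `δ ∈ {year, month}`, if `D1 < D2` then
`D1 +δ n < D2 +δ n`. -/
theorem strict_monotonicity_year_month (y1 m1 d1 y2 m2 d2 n : ℤ) (δ : DUnit)
    (hδ : δ = DUnit.year ∨ δ = DUnit.month)
    (hm1 : 1 ≤ m1) (hm1' : m1 ≤ 12) (hm2 : 1 ≤ m2) (hm2' : m2 ≤ 12)
    (hlt : DateLt y1 m1 d1 y2 m2 d2) :
    DValue.lt (addU δ (DValue.date y1 m1 d1) n)
      (addU δ (DValue.date y2 m2 d2) n) := by
  rcases hδ with rfl | rfl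
  · exact (DValue.addY_lt_addY_iff (.date y1 m1 d1) (.date y2 m2 d2) n).2 hlt
  · exact (DValue.date_addM_lt_date_addM_iff y1 d1 y2 d2 n hm1 hm1' hm2 hm2').2 hlt
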